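/- Let Γ = (G, (ρ_0, …, ρ_{r−1})) be an even transitive string C-group of degree 11 of rank r ∈ {4,5} admitting a 2-fracture graph. Suppose ρ_i is a 4-transposition (it moves exactly 8 of the 11 points), and suppose there are distinct points x, y both fixed by ρ_i with ρ_j(x) = y for some index j with |j − i| ≥ 2. Then the permutation representation graph has a double {i,j}-edge and an {i,j}-square; in particular, ρ_j is also a 4-transposition. -/

import Mathlib

/-!
Since `ρ_i` and `ρ_j` commute, `ρ_j` permutes the three fixed points `x`, `y`, `z` of `ρ_i`, hence it
swaps `x` and `y` and fixes `z`. An `i`-edge joins two points of the same `G_j`-orbit, so a `j`-edge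
that is also an `i`-edge is never a fracture edge for `j`. As there are two fracture edges for `j`,
one of them, `{a, ρ_j a}`, is different from `{x, y}`; then `ρ_i` moves `a` and `ρ_i a ≠ ρ_j a`, so
`a`, `ρ_i a`, `ρ_j ρ_i a`, `ρ_j a` form an `{i,j}`-square.

Thus `ρ_j` moves the six points consisting of `x`, `y` and the square, and fixes `z`, so it moves
between six and ten points. An even involution moves a multiple of four points
(`four_dvd_card_support`), so `ρ_j` moves exactly eight. The two remaining moved points form a
`j`-edge; their set is `ρ_i`-invariant and `ρ_i` moves both, so this edge is a double `{i,j}`-edge.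
-/

open Equiv

/-- An involution: an element of order 2. -/
def IsInvolution {G : Type*} [Group G] (g : G) : Prop := g ≠ 1 ∧ g * g = 1

/-- The string (commuting) property: `(ρ i * ρ j)^2 = 1` whenever `|i - j| > 1`. -/
def StringCommuting {G : Type*} [Group G] {r : ℕ} (ρ : Fin r → G) : Prop :=
  ∀ i j : Fin r, ((i : ℕ) + 1 < j ∨ (j : ℕ) + 1 < i) → (ρ i * ρ j) * (ρ i * ρ j) = 1

/-- A string group generated by involutions (sggi). -/
def Sggi {G : Type*} [Group G] {r : ℕ} (ρ : Fin r → G) : Prop :=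
  (∀ i, IsInvolution (ρ i)) ∧ StringCommuting ρ

/-- The intersection property of string C-groups. -/
def IntersectionProperty {G : Type*} [Group G] {r : ℕ} (ρ : Fin r → G) : Prop :=
  ∀ J K : Set (Fin r),
    Subgroup.closure (ρ '' J) ⊓ Subgroup.closure (ρ '' K) =
      Subgroup.closure (ρ '' (J ∩ K))

/-- `a` and `b` are in the same orbit of the subgroup `H` of `Perm Ω`. -/
def SameOrbit {Ω : Type*} (H : Subgroup (Perm Ω)) (a b : Ω) : Prop :=
  ∃ g ∈ H, g a = b

/-- The maximal parabolic subgroup `G_i = ⟨ρ_j : j ≠ i⟩`. -/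
def Gi {r : ℕ} {Ω : Type*} (ρ : Fin r → Perm Ω) (i : Fin r) : Subgroup (Perm Ω) :=
  Subgroup.closure (ρ '' {j | j ≠ i})

/-- A subgroup of `Perm Ω` is transitive. -/
def IsTransitiveSubgroup {Ω : Type*} (H : Subgroup (Perm Ω)) : Prop :=
  ∀ x y : Ω, ∃ g ∈ H, g x = y

/-- The sggi admits a 2-fracture graph: for every `i` there are at least two
distinct `i`-edges whose endpoints lie in different `G_i`-orbits. -/
def Has2FractureGraph {r : ℕ} {Ω : Type*} [DecidableEq Ω] (ρ : Fin r → Perm Ω) : Prop :=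
  ∀ i, ∃ a b : Ω, ρ i a ≠ a ∧ ρ i b ≠ b ∧
    ¬ SameOrbit (Gi ρ i) a (ρ i a) ∧ ¬ SameOrbit (Gi ρ i) b (ρ i b) ∧
    ({a, ρ i a} : Finset Ω) ≠ ({b, ρ i b} : Finset Ω)

/-- A permutation squaring to `1` is a product of some number `m` of disjoint transpositions; it has
sign `(-1) ^ m` and moves `2 * m` points, so it moves a multiple of four points when it is even. -/
theorem four_dvd_card_support {α : Type*} [Fintype α] [DecidableEq α] (σ : Perm α)
    (h : σ * σ = 1) (hs : Perm.sign σ = 1) : 4 ∣ σ.support.card := by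
  have h2 : σ ^ 2 = 1 := by rw [pow_two, h]
  have hc : σ.cycleType = Multiset.replicate (Multiset.card σ.cycleType) 2 :=
    Perm.cycleType_of_pow_prime_eq_one h2
  have hsum := σ.sum_cycleType
  rw [Perm.sign_of_cycleType] at hs
  rw [hc] at hsum hs
  simp only [Multiset.sum_replicate, smul_eq_mul, Multiset.card_replicate] at hsum hs
  have he := (neg_one_pow_eq_one_iff_even (R := ℤˣ) (by decide)).1 hs
  rw [Nat.even_iff] at he
  omega

/-- If `a` and `ρ j a` lie in different `G_j`-orbits, no other generator maps `a` to `ρ j a`, because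
all of them lie in `G_j`. -/
theorem ne_of_not_sameOrbit {r : ℕ} {Ω : Type*} {ρ : Fin r → Perm Ω} {i j : Fin r} (hij : i ≠ j)
    {a : Ω} (h : ¬ SameOrbit (Gi ρ j) a (ρ j a)) : ρ i a ≠ ρ j a := fun he =>
  h ⟨ρ i, Subgroup.subset_closure ⟨i, hij, rfl⟩, he⟩

/-- Let `Γ` be an even transitive string C-group of degree 11
of rank r ∈ {4,5} admitting a 2-fracture graph. If `ρ_i` is a 4-transposition
(moves exactly 8 points) and `ρ_j` (with `|j - i| ≥ 2`) swaps two distinct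
fixed points of `ρ_i`, then there is a double `{i,j}`-edge and an
`{i,j}`-square; in particular `ρ_j` is also a 4-transposition. -/
theorem statement19 {r : ℕ} (hr : r = 4 ∨ r = 5) (ρ : Fin r → Perm (Fin 11))
    (hsggi : Sggi ρ) (hip : IntersectionProperty ρ)
    (htrans : IsTransitiveSubgroup (Subgroup.closure (Set.range ρ)))
    (heven : ∀ i, Perm.sign (ρ i) = 1)
    (h2frac : Has2FractureGraph ρ)
    (i j : Fin r) (hij : (i : ℕ) + 2 ≤ j ∨ (j : ℕ) + 2 ≤ i)
    (hsupp : (ρ i).support.card = 8)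
    (x y : Fin 11) (hxy : x ≠ y) (hx : ρ i x = x) (hy : ρ i y = y)
    (hswap : ρ j x = y) :
    (∃ a b : Fin 11, a ≠ b ∧ ρ i a = b ∧ ρ j a = b) ∧
    (∃ a b c d : Fin 11,
      a ≠ b ∧ a ≠ c ∧ a ≠ d ∧ b ≠ c ∧ b ≠ d ∧ c ≠ d ∧
      ρ i a = b ∧ ρ j b = c ∧ ρ i c = d ∧ ρ j d = a) ∧
    (ρ j).support.card = 8 := by
  have hne : i ≠ j := by rintro rfl; omega
  have inv : ∀ (k : Fin r) (p : Fin 11), ρ k (ρ k p) = p := fun k p => by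
    rw [← Perm.mul_apply, (hsggi.1 k).2, Perm.one_apply]
  have hcomm : ∀ p, ρ i (ρ j p) = ρ j (ρ i p) := fun p => by
    have h := DFunLike.congr_fun (hsggi.2 i j (by omega)) (ρ j (ρ i p))
    simpa only [Perm.mul_apply, inv, Perm.one_apply] using h
  have hswap' : ρ j y = x := by rw [← hswap, inv]
  obtain ⟨z, hzx, hzy, hz, hfix⟩ : ∃ z, z ≠ x ∧ z ≠ y ∧ ρ i z = z ∧
      ∀ p, ρ i p = p → p = x ∨ p = y ∨ p = z := by
    have hc : (((ρ i).support)ᶜ \ {x, y}).card = 1 := by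
      rw [Finset.card_sdiff_of_subset (by simp [Finset.insert_subset_iff, hx, hy]),
        Finset.card_compl, hsupp, Finset.card_pair hxy, Fintype.card_fin]
    obtain ⟨z, hz⟩ := Finset.card_eq_one.1 hc
    simp only [Finset.ext_iff, Finset.mem_sdiff, Finset.mem_compl, Perm.mem_support,
      Finset.mem_insert, Finset.mem_singleton, not_not, not_or] at hz
    refine ⟨z, ((hz z).2 rfl).2.1, ((hz z).2 rfl).2.2, ((hz z).2 rfl).1, fun p hp => ?_⟩
    by_contra! h
    exact h.2.2 ((hz p).1 ⟨hp, h.1, h.2.1⟩)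
  have hjz : ρ j z = z := by
    rcases hfix (ρ j z) (by rw [hcomm, hz]) with h | h | h
    · exact absurd (by rw [← inv j z, h, hswap]) hzy
    · exact absurd (by rw [← inv j z, h, hswap']) hzx
    · exact h
  -- A fracture edge for `j` other than `{x, y}`.
  obtain ⟨a, hax, hay, hja, hija⟩ : ∃ a, a ≠ x ∧ a ≠ y ∧ ρ j a ≠ a ∧ ρ i a ≠ ρ j a := by
    obtain ⟨a, b, ha, hb, hoa, hob, hab⟩ := h2frac j
    by_cases h : a = x ∨ a = y
    · refine ⟨b, ?_, ?_, hb, ne_of_not_sameOrbit hne hob⟩ <;> rintro rfl <;>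
        rcases h with rfl | rfl <;> simp_all [Finset.pair_comm]
    · rw [not_or] at h
      exact ⟨a, h.1, h.2, ha, ne_of_not_sameOrbit hne hoa⟩
  have hia : ρ i a ≠ a := fun h => by
    rcases hfix a h with rfl | rfl | rfl
    exacts [hax rfl, hay rfl, hja hjz]
  -- The square through `a` is `a, b, c, d` with `b = ρ_i a`, `d = ρ_j a` and `c` opposite to `a`.
  obtain ⟨b, hb⟩ : ∃ b, ρ i a = b := ⟨_, rfl⟩
  obtain ⟨d, hd⟩ : ∃ d, ρ j a = d := ⟨_, rfl⟩
  obtain ⟨c, hc⟩ : ∃ c, ρ j b = c := ⟨_, rfl⟩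
  have hib : ρ i b = a := by rw [← hb, inv]
  have hjd : ρ j d = a := by rw [← hd, inv]
  have hjc : ρ j c = b := by rw [← hc, inv]
  have hid : ρ i d = c := by rw [← hd, hcomm, hb, hc]
  have hic : ρ i c = d := by rw [← hid, inv]
  have hab : a ≠ b := by grind
  have had : a ≠ d := by grind
  have hbd : b ≠ d := by grind
  have hac : a ≠ c := by grind
  have hbc : b ≠ c := by grind
  have hcd : c ≠ d := by grind
  obtain ⟨S, hS⟩ : ∃ S : Finset (Fin 11), S = {x, y, a, b, c, d} := ⟨_, rfl⟩
  have hmemS : ∀ p, p ∈ S ↔ p = x ∨ p = y ∨ p = a ∨ p = b ∨ p = c ∨ p = d := by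
    intro p; simp [hS]
  have hScard : S.card = 6 := by
    rw [hS]
    repeat rw [Finset.card_insert_of_notMem (by grind)]
    rw [Finset.card_singleton]
  have hSsub : S ⊆ (ρ j).support := fun p hp => by
    rw [hmemS] at hp
    rw [Perm.mem_support]
    grind
  have hcard : (ρ j).support.card = 8 := by
    have h4 := four_dvd_card_support (ρ j) (hsggi.1 j).2 (heven j)
    have hlo := Finset.card_le_card hSsub
    have hhi : (ρ j).support.card < Fintype.card (Fin 11) :=
      (Finset.card_lt_iff_ne_univ _).2 fun h => by
        have := Finset.mem_univ z
        rw [← h, Perm.mem_support] at this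
        exact this hjz
    rw [Fintype.card_fin] at hhi
    omega
  refine ⟨?_, ⟨a, b, c, d, hab, hac, had, hbc, hbd, hcd, hb, hc, hic, hjd⟩, hcard⟩
  -- The two points moved by `ρ_j` outside `S` form the double edge.
  have hR : ((ρ j).support \ S).card = 2 := by
    rw [Finset.card_sdiff_of_subset hSsub, hcard, hScard]
  obtain ⟨e, f, hef, hR⟩ := Finset.card_eq_two.1 hR
  have hmem : ∀ p, p = e ∨ p = f ↔ ρ j p ≠ p ∧ p ∉ S := fun p => by
    have := Finset.ext_iff.1 hR p
    simpa using this.symm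
  simp only [hmemS] at hmem
  have he := (hmem e).1 (Or.inl rfl)
  have hie : ρ i e ≠ e := by grind
  have hjef : ρ j e = f := by
    have := (hmem (ρ j e)).2 (by grind)
    exact this.resolve_left he.1
  have hief : ρ i e = f := by
    have := (hmem (ρ i e)).2 (by grind)
    exact this.resolve_left hie
  exact ⟨e, f, hef, hief, hjef⟩
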